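/- Let L, M, H be the (n+m)×(n+m) matrices over the ring of ℂ-linear endomorphisms of F defined by: L_{ii} = k^{p(i)}∂_i − Σ_{j≠i} k^{1−p(j)} x_i/(x_i−x_j) and L_{ij} = k^{1−p(j)} x_i/(x_i−x_j) for i ≠ j; M_{ii} = −Σ_{j≠i} 2 k^{1−p(j)} x_i x_j/(x_i−x_j)² and M_{ij} = 2 k^{1−p(j)} x_i x_j/(x_i−x_j)² for i ≠ j (all rational functions acting by multiplication); and H the diagonal matrix with every diagonal entry equal to L_2. Let e = (1,…,1)^t be the column vector of ones and e^* = (1,…,1, 1/k,…,1/k) the row vector with n entries 1 and m entries 1/k. Then M e = 0, e^* M = 0, and the Lax relation [L, H] = [L, M] holds. -/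

import Mathlib

/-!
Put `a_i = k^{p(i)}`, `b_i = k^{1-p(i)}`, `φ_ij = x_i/(x_i-x_j)`, `ψ_ij = x_i x_j/(x_i-x_j)²` and
`w_ij = φ_ij - φ_ji`. The convention `a / 0 = 0` makes all three vanish at `i = j`, so every sum
over `j ≠ i` is a sum over all `j`. The identities `M e = 0` and `e^* M = 0` follow at once from
the symmetry of `ψ`, since `k^{-p(i)} = b_i / k`.

Since `a_i b_i = k`, the Hamiltonian has the normal form `L_2 = Σ_l (a_l ∂_l² - V_l ∂_l)` with
`V_l = Σ_j b_j w_lj` (`P_eq`). The formulas `∂_l φ_ij = (δ_lj - δ_li) ψ_ij` and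
`∂_l ψ_ij = (δ_lj - δ_li) w_ij ψ_ij` then give the commutators of `L_2` with multiplication by
`φ_ij` (`P_phi_mul`) and with `∂_i` (`D_P`). The latter uses that Euler derivations commute, as a
derivation of the rational function field killing all coordinates is zero (`der_eq_zero`).

Comparing the `(i, j)` entries of the two commutators, the first-order parts agree because
`a_i b_i` does not depend on `i`. The zeroth-order parts with three distinct indices
cancel by functional equations for `φ`, `ψ`, `w`: `three_term` off the diagonal, and
`three_term_symm`, through the symmetrised double sum `sum_psi_V`, on it. What is left is a multiple
of `(a_i + b_i) - (a_j + b_j)`, or a sum of such multiples, and `a_i + b_i = k + 1` for every `i`.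
-/


set_option synthInstance.maxHeartbeats 400000
set_option maxHeartbeats 1000000

noncomputable section
open scoped BigOperators

/-- The field of rational functions `ℂ(x₁,…,x_N)`. -/
def Fld (N : ℕ) : Type := FractionRing (MvPolynomial (Fin N) ℂ)

instance (N : ℕ) : Field (Fld N) :=
  inferInstanceAs (Field (FractionRing (MvPolynomial (Fin N) ℂ)))
instance (N : ℕ) : Algebra ℂ (Fld N) :=
  inferInstanceAs (Algebra ℂ (FractionRing (MvPolynomial (Fin N) ℂ)))
instance (N : ℕ) : Algebra (MvPolynomial (Fin N) ℂ) (Fld N) :=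
  inferInstanceAs (Algebra (MvPolynomial (Fin N) ℂ) (FractionRing (MvPolynomial (Fin N) ℂ)))

/-- The coordinate `x_i` as an element of `ℂ(x₁,…,x_N)`; for `N = n + m` the last `m`
coordinates are the variables `y_j = x_{n+j}`. -/
def xv {N : ℕ} (i : Fin N) : Fld N :=
  algebraMap (MvPolynomial (Fin N) ℂ) (Fld N) (MvPolynomial.X i)

/-- The parity function: `p(i) = 0` on the first `n` indices, `p(i) = 1` on the rest. -/
def par (n : ℕ) {N : ℕ} (i : Fin N) : ℕ := if (i : ℕ) < n then 0 else 1

/-- `ℂ`-linear operators on `ℂ(x₁,…,x_N)`. -/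
abbrev EndF (N : ℕ) := Fld N →ₗ[ℂ] Fld N

/-- Multiplication by a rational function, as a `ℂ`-linear operator. -/
def mulOp {N : ℕ} (a : Fld N) : EndF N := LinearMap.mulLeft ℂ a

/-- The recursively defined operators `∂_i^{(p)}`:
`∂_i^{(1)} = k^{p(i)} ∂_i` and
`∂_i^{(p)} = ∂_i^{(1)} ∂_i^{(p-1)} − Σ_{j≠i} k^{1-p(j)} (x_i/(x_i-x_j)) (∂_i^{(p-1)} − ∂_j^{(p-1)})`. -/
def Dpow (n : ℕ) (k : ℂ) {N : ℕ} (Deul : Fin N → EndF N) : ℕ → Fin N → EndF N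
  | 0 => fun _ => 0
  | 1 => fun i => (k ^ par n i) • Deul i
  | (p+2) => fun i =>
      ((k ^ par n i) • Deul i) ∘ₗ Dpow n k Deul (p+1) i
        - ∑ j ∈ Finset.univ.erase i,
            (k ^ (1 - par n j)) •
              (mulOp (xv i / (xv i - xv j)) ∘ₗ (Dpow n k Deul (p+1) i - Dpow n k Deul (p+1) j))

/-- The deformed CMS integrals `L_p = Σ_i k^{-p(i)} ∂_i^{(p)}`. -/
def Ltot (n : ℕ) (k : ℂ) {N : ℕ} (Deul : Fin N → EndF N) (p : ℕ) : EndF N :=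
  ∑ i : Fin N, (k⁻¹ ^ par n i) • Dpow n k Deul p i

/-- `Deul` is the family of Euler derivations `∂_i = x_i ∂/∂x_i`: each `Deul i` is a `ℂ`-linear
operator on `ℂ(x₁,…,x_N)` satisfying the Leibniz rule and taking the prescribed values on the
coordinates (these properties determine it uniquely). -/
def IsEulerFamily {N : ℕ} (Deul : Fin N → EndF N) : Prop :=
  (∀ (i : Fin N) (f g : Fld N), Deul i (f * g) = f * Deul i g + Deul i f * g) ∧
  (∀ i j : Fin N, Deul i (xv j) = if j = i then xv j else 0)

/-- The quantum Moser matrix `L`. -/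
def Lmat (n : ℕ) (k : ℂ) {N : ℕ} (Deul : Fin N → EndF N) : Matrix (Fin N) (Fin N) (EndF N) :=
  Matrix.of fun i j =>
    if i = j then
      (k ^ par n i) • Deul i
        - ∑ l ∈ Finset.univ.erase i, (k ^ (1 - par n l)) • mulOp (xv i / (xv i - xv l))
    else (k ^ (1 - par n j)) • mulOp (xv i / (xv i - xv j))

/-- The entries of the quantum Moser matrix `M`. -/
def MmatEntry (n : ℕ) (k : ℂ) {N : ℕ} (i j : Fin N) : EndF N :=
  if i = j then
    - ∑ l ∈ Finset.univ.erase i,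
        (2 * k ^ (1 - par n l)) • (mulOp (xv i * xv l / (xv i - xv l) ^ 2) : EndF N)
  else (2 * k ^ (1 - par n j)) • (mulOp (xv i * xv j / (xv i - xv j) ^ 2) : EndF N)

/-- The quantum Moser matrix `M`. -/
def Mmat (n : ℕ) (k : ℂ) (N : ℕ) : Matrix (Fin N) (Fin N) (EndF N) :=
  Matrix.of fun i j => MmatEntry n k i j

/-- The diagonal matrix Hamiltonian `H`, with every diagonal entry equal to `L_2`. -/
def Hmat (n : ℕ) (k : ℂ) {N : ℕ} (Deul : Fin N → EndF N) : Matrix (Fin N) (Fin N) (EndF N) :=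
  Matrix.diagonal fun _ => Ltot n k Deul 2

namespace MoserLax

set_option linter.unusedSectionVars false

variable {K ι : Type*} [Field K] [Algebra ℂ K] [Fintype ι] [DecidableEq ι]

/-! ### The rational functions in the Moser matrices -/

/-- `φ_ij = x_i / (x_i - x_j)`; the convention `a / 0 = 0` gives `φ_ii = 0`, so that sums over
`j ≠ i` may be taken over all `j`. -/
def phi (x : ι → K) (i j : ι) : K := x i / (x i - x j)

/-- `ψ_ij = x_i x_j / (x_i - x_j)²`, with `ψ_ii = 0`. -/
def psi (x : ι → K) (i j : ι) : K := x i * x j / (x i - x j) ^ 2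

/-- `w_ij = φ_ij - φ_ji`, which is `(x_i + x_j) / (x_i - x_j)` off the diagonal. -/
def w (x : ι → K) (i j : ι) : K := phi x i j - phi x j i

@[simp] lemma phi_self (x : ι → K) (i : ι) : phi x i i = 0 := by simp [phi]
@[simp] lemma psi_self (x : ι → K) (i : ι) : psi x i i = 0 := by simp [psi]
@[simp] lemma w_self (x : ι → K) (i : ι) : w x i i = 0 := by simp [w]

lemma psi_symm (x : ι → K) (i j : ι) : psi x i j = psi x j i := by
  unfold psi; rw [mul_comm, ← neg_sub (x j) (x i), neg_sq]

lemma w_antisymm (x : ι → K) (i j : ι) : w x i j = - w x j i := by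
  simp [w]

lemma two_phi {x : ι → K} (hx : Function.Injective x) (i j : ι) :
    2 * phi x i j = w x i j + 1 - (if i = j then 1 else 0) := by
  by_cases h : i = j
  · subst h; simp
  · have h1 : x i - x j ≠ 0 := sub_ne_zero.2 (hx.ne h)
    have h2 : x j - x i ≠ 0 := sub_ne_zero.2 (hx.ne (Ne.symm h))
    have h3 : phi x i j + phi x j i = 1 := by
      unfold phi
      rw [← neg_sub (x i) (x j), div_neg, ← sub_eq_add_neg, ← sub_div, div_self h1]
    simp only [w, if_neg h]
    linear_combination h3

/-- The functional equation for `φ` and `ψ`, with its degenerate cases `l = i` and `l = j`. -/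
lemma three_term {x : ι → K} (hx : Function.Injective x) {i j : ι} (h : i ≠ j) (l : ι) :
    phi x i l * psi x l j - psi x i l * phi x l j + phi x i j * (psi x i l - psi x j l)
      = ((if l = j then 1 else 0) - (if l = i then 1 else 0)) * (phi x i j * psi x i j) := by
  by_cases hi : l = i
  · subst hi; simp [h, psi_symm x j l]
  by_cases hj : l = j
  · subst hj; simp [hi]
  have h1 : x i - x j ≠ 0 := sub_ne_zero.2 (hx.ne h)
  have h2 : x i - x l ≠ 0 := sub_ne_zero.2 (hx.ne (Ne.symm hi))
  have h3 : x l - x j ≠ 0 := sub_ne_zero.2 (hx.ne hj)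
  rw [psi_symm x j l]
  simp only [hi, hj, if_false, phi, psi]
  field_simp
  ring

/-- The part of `ψ_il (w_ir - w_lr)` symmetric in `l, r` is supported on coincident indices. -/
lemma three_term_symm {x : ι → K} (hx : Function.Injective x) (i l r : ι) :
    psi x i l * (w x i r - w x l r) + psi x i r * (w x i l - w x r l)
      = (if l = r then 2 * (psi x i l * w x i l) else 0)
        + (if i = r then psi x i l * w x i l else 0)
        + (if i = l then psi x i r * w x i r else 0) := by
  by_cases hil : i = l
  · subst hil
    by_cases hir : i = r
    · subst hir; simp
    · simp [hir, w_antisymm x r i]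
  by_cases hir : i = r
  · subst hir; simp [hil, Ne.symm hil, w_antisymm x l i]
  by_cases hlr : l = r
  · subst hlr; simp [hil]; ring
  have h1 : x i - x l ≠ 0 := sub_ne_zero.2 (hx.ne hil)
  have h2 : x i - x r ≠ 0 := sub_ne_zero.2 (hx.ne hir)
  have h3 : x l - x r ≠ 0 := sub_ne_zero.2 (hx.ne hlr)
  have h1' : x l - x i ≠ 0 := sub_ne_zero.2 (hx.ne (Ne.symm hil))
  have h2' : x r - x i ≠ 0 := sub_ne_zero.2 (hx.ne (Ne.symm hir))
  have h3' : x r - x l ≠ 0 := sub_ne_zero.2 (hx.ne (Ne.symm hlr))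
  have e1 : w x i r - w x l r = 2 * (phi x i r - phi x l r) := by
    have h4 := two_phi hx i r
    have h5 := two_phi hx l r
    simp only [hir, hlr, if_false] at *
    linear_combination h5 - h4
  have e2 : w x i l - w x r l = 2 * (phi x i l - phi x r l) := by
    have h4 := two_phi hx i l
    have h5 := two_phi hx r l
    simp only [hil, Ne.symm hlr, if_false] at *
    linear_combination h5 - h4
  rw [e1, e2]
  simp only [hil, hir, hlr, if_false, phi, psi]
  have e3 : x r - x l = - (x l - x r) := by ring
  rw [e3]
  field_simp
  ring

/-! ### Euler derivations -/

variable {x : ι → K} {D : ι → Derivation ℂ K K}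

lemma leib (E : Derivation ℂ K K) (f g : K) : E (f * g) = f * E g + g * E f := by
  simp [Derivation.leibniz]

lemma D_alg (E : Derivation ℂ K K) (c : ℂ) (f : K) :
    E (algebraMap ℂ K c * f) = algebraMap ℂ K c * E f := by
  simp

lemma D_phi (hx : Function.Injective x) (hD : ∀ i j, D i (x j) = if j = i then x j else 0)
    (l i j : ι) :
    D l (phi x i j) = ((if l = j then 1 else 0) - (if l = i then 1 else 0)) * psi x i j := by
  by_cases h : i = j
  · subst h; simp
  have h1 : x i - x j ≠ 0 := sub_ne_zero.2 (hx.ne h)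
  have h2 : phi x i j * (x i - x j) = x i := by unfold phi; field_simp
  have h3 := congrArg (D l) h2
  rw [leib, map_sub, hD, hD] at h3
  have h4 : psi x i j * (x i - x j) ^ 2 = x i * x j := by unfold psi; field_simp
  refine mul_right_cancel₀ (pow_ne_zero 2 h1) ?_
  rw [mul_assoc, h4]
  by_cases hi : l = i
  · subst hi
    simp [h, Ne.symm h] at h3 ⊢
    linear_combination (x l - x j) * h3 - x l * h2
  · by_cases hj : l = j
    · subst hj
      simp [hi, Ne.symm hi] at h3 ⊢
      linear_combination (x i - x l) * h3 + x l * h2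
    · simp [Ne.symm hi, Ne.symm hj, hi, hj] at h3 ⊢
      rcases h3 with h3 | h3
      · exact absurd h3 h1
      · exact Or.inl h3

lemma D_w (hx : Function.Injective x) (hD : ∀ i j, D i (x j) = if j = i then x j else 0)
    (l i j : ι) :
    D l (w x i j) = 2 * ((if l = j then 1 else 0) - (if l = i then 1 else 0)) * psi x i j := by
  rw [w, map_sub, D_phi hx hD, D_phi hx hD, psi_symm x j i]
  ring

lemma psi_eq (hx : Function.Injective x) (i j : ι) :
    psi x i j = phi x i j ^ 2 - phi x i j := by
  by_cases h : i = j
  · subst h; simp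
  have h1 : x i - x j ≠ 0 := sub_ne_zero.2 (hx.ne h)
  unfold phi psi
  field_simp
  ring

lemma D_psi (hx : Function.Injective x) (hD : ∀ i j, D i (x j) = if j = i then x j else 0)
    (l i j : ι) :
    D l (psi x i j)
      = ((if l = j then 1 else 0) - (if l = i then 1 else 0)) * (w x i j * psi x i j) := by
  by_cases h : i = j
  · subst h; simp
  have h2 := two_phi hx i j
  rw [if_neg h] at h2
  have h3 : D l (psi x i j) = D l (phi x i j * phi x i j - phi x i j) := by
    rw [psi_eq hx, sq]
  rw [h3, map_sub, leib, D_phi hx hD]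
  linear_combination
    ((if l = j then 1 else 0) - (if l = i then 1 else 0)) * psi x i j * h2

lemma DD_phi (hx : Function.Injective x) (hD : ∀ i j, D i (x j) = if j = i then x j else 0)
    (l i j : ι) :
    D l (D l (phi x i j))
      = ((if l = j then 1 else 0) + (if l = i then 1 else 0)) * (w x i j * psi x i j) := by
  by_cases h : i = j
  · subst h; simp
  rw [D_phi hx hD]
  by_cases hi : l = i
  · subst hi; simp [h, D_psi hx hD]
  · by_cases hj : l = j
    · subst hj; simp [hi, D_psi hx hD]
    · simp [hi, hj]

/-! ### The second-order Hamiltonian -/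

/-- The scalar `a_i ∈ ℂ` viewed in `K`. -/
abbrev cst (K : Type*) [Field K] [Algebra ℂ K] (a : ι → ℂ) (i : ι) : K := algebraMap ℂ K (a i)

/-- The coefficient `V_i = Σ_j b_j w_ij` of `-∂_i` in the Hamiltonian. -/
def V (x : ι → K) (b : ι → ℂ) (i : ι) : K := ∑ j, cst K b j * w x i j

/-- `U_i = Σ_j b_j φ_ij`, the potential in the `i`-th diagonal entry of `L`. -/
def U (x : ι → K) (b : ι → ℂ) (i : ι) : K := ∑ j, cst K b j * phi x i j

/-- `S_i = Σ_j b_j ψ_ij`; the `i`-th diagonal entry of `M` is `-2 S_i`. -/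
def S (x : ι → K) (b : ι → ℂ) (i : ι) : K := ∑ j, cst K b j * psi x i j

/-- The Hamiltonian in normal form, `P f = Σ_l (a_l ∂_l² f - V_l ∂_l f)`. -/
def P (x : ι → K) (D : ι → Derivation ℂ K K) (a b : ι → ℂ) (f : K) : K :=
  ∑ l, (cst K a l * D l (D l f) - V x b l * D l f)

variable {a b : ι → ℂ}

lemma P_mul (g f : K) :
    P x D a b (g * f)
      = g * P x D a b f + 2 * (∑ l, cst K a l * (D l g * D l f)) + f * P x D a b g := by
  simp only [P, Finset.mul_sum, ← Finset.sum_add_distrib]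
  refine Finset.sum_congr rfl fun l _ => ?_
  simp only [leib, map_add]
  ring

lemma P_sum_mul {κ : Type*} (s : Finset κ) (c : κ → ℂ) (g : κ → K) :
    P x D a b (∑ r ∈ s, algebraMap ℂ K (c r) * g r)
      = ∑ r ∈ s, algebraMap ℂ K (c r) * P x D a b (g r) := by
  simp only [P, map_sum, D_alg, Finset.mul_sum, ← Finset.sum_sub_distrib]
  rw [Finset.sum_comm]
  refine Finset.sum_congr rfl fun r _ => Finset.sum_congr rfl fun l _ => ?_
  ring

lemma P_const_mul (c : ℂ) (g : K) :
    P x D a b (algebraMap ℂ K c * g) = algebraMap ℂ K c * P x D a b g := by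
  simpa using P_sum_mul (x := x) (D := D) (a := a) (b := b)
    (Finset.univ : Finset Unit) (fun _ => c) (fun _ => g)

/-- The commutator of the Hamiltonian with multiplication by `φ_ij`. -/
lemma P_phi_mul (hx : Function.Injective x)
    (hD : ∀ i j, D i (x j) = if j = i then x j else 0) (i j : ι) (f : K) :
    P x D a b (phi x i j * f) = phi x i j * P x D a b f
      + psi x i j * (2 * (cst K a j * D j f - cst K a i * D i f)
        + ((cst K a i + cst K a j) * w x i j + V x b i - V x b j) * f) := by
  have h1 : ∑ l, cst K a l * (D l (phi x i j) * D l f)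
      = psi x i j * (cst K a j * D j f - cst K a i * D i f) := by
    have : ∀ l, cst K a l * (D l (phi x i j) * D l f)
      = (if l = j then cst K a l * psi x i j * D l f else 0)
        - (if l = i then cst K a l * psi x i j * D l f else 0) := by
      intro l; rw [D_phi hx hD]; split_ifs <;> ring
    simp only [this, Finset.sum_sub_distrib, Finset.sum_ite_eq', Finset.mem_univ, if_true]
    ring
  have h2 : P x D a b (phi x i j)
      = psi x i j * ((cst K a i + cst K a j) * w x i j + V x b i - V x b j) := by
    have : ∀ l, cst K a l * D l (D l (phi x i j)) - V x b l * D l (phi x i j)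
      = (if l = j then cst K a l * (w x i j * psi x i j) - V x b l * psi x i j else 0)
        + (if l = i then cst K a l * (w x i j * psi x i j) + V x b l * psi x i j else 0) := by
      intro l; rw [DD_phi hx hD, D_phi hx hD]; split_ifs <;> ring
    simp only [P, this, Finset.sum_add_distrib, Finset.sum_ite_eq', Finset.mem_univ, if_true]
    ring
  rw [P_mul, h1, h2]
  ring

lemma D_V (hx : Function.Injective x)
    (hD : ∀ i j, D i (x j) = if j = i then x j else 0) (i l : ι) :
    D i (V x b l) = 2 * (cst K b i * psi x i l) - (if i = l then 2 * S x b i else 0) := by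
  have : ∀ r, cst K b r * D i (w x l r)
      = (if i = r then 2 * (cst K b r * psi x l r) else 0)
        - (if i = l then 2 * (cst K b r * psi x l r) else 0) := by
    intro r; rw [D_w hx hD]; split_ifs <;> ring
  simp only [V, map_sum, D_alg, this, Finset.sum_sub_distrib, Finset.sum_ite_eq,
    Finset.mem_univ, if_true, psi_symm x i l]
  by_cases h : i = l
  · subst h; simp [S, Finset.mul_sum]
  · simp [h]

/-- The commutator of the Hamiltonian with an Euler derivation. -/
lemma D_P (hx : Function.Injective x)
    (hD : ∀ i j, D i (x j) = if j = i then x j else 0)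
    (hc : ∀ i j f, D i (D j f) = D j (D i f)) (i : ι) (f : K) :
    D i (P x D a b f) - P x D a b (D i f)
      = 2 * S x b i * D i f - 2 * (cst K b i * ∑ l, psi x i l * D l f) := by
  have : ∀ l, D i (cst K a l * D l (D l f) - V x b l * D l f)
        - (cst K a l * D l (D l (D i f)) - V x b l * D l (D i f))
      = (if i = l then 2 * S x b i * D l f else 0)
        - 2 * (cst K b i * (psi x i l * D l f)) := by
    intro l
    rw [map_sub, D_alg, leib, D_V hx hD, hc i l f, hc i l (D l f), hc i l f]
    split_ifs <;> ring
  simp only [P, map_sum, ← Finset.sum_sub_distrib, this]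
  simp only [Finset.sum_sub_distrib, Finset.sum_ite_eq, Finset.mem_univ, if_true,
    Finset.mul_sum]

lemma D_S (hx : Function.Injective x)
    (hD : ∀ i j, D i (x j) = if j = i then x j else 0) (i : ι) :
    D i (S x b i) = - ∑ l, cst K b l * (w x i l * psi x i l) := by
  simp only [S, map_sum, D_alg, D_psi hx hD, ← Finset.sum_neg_distrib]
  refine Finset.sum_congr rfl fun l _ => ?_
  by_cases h : i = l
  · subst h; simp
  · simp [h]

lemma two_U (hx : Function.Injective x) (i : ι) :
    2 * U x b i = V x b i + ∑ l, cst K b l - cst K b i := by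
  have : ∀ l, 2 * (cst K b l * phi x i l)
      = cst K b l * w x i l + cst K b l - (if i = l then cst K b l else 0) := by
    intro l
    have := two_phi hx i l
    split_ifs at this ⊢ <;> linear_combination cst K b l * this
  simp only [U, V, Finset.mul_sum, this, Finset.sum_sub_distrib, Finset.sum_add_distrib,
    Finset.sum_ite_eq, Finset.mem_univ, if_true]

/-- The pairwise potentials cancel up to diagonal terms, by symmetrising the double sum. -/
lemma sum_psi_V (hx : Function.Injective x) (i : ι) :
    ∑ l, cst K b l * (psi x i l * (V x b i - V x b l))
      = ∑ l, cst K b l * ((cst K b l + cst K b i) * (w x i l * psi x i l)) := by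
  have h2 : (2 : K) ≠ 0 := by
    have : CharZero K := charZero_of_injective_algebraMap (algebraMap ℂ K).injective
    exact two_ne_zero
  set T : K := ∑ l, ∑ r, cst K b l * cst K b r * (psi x i l * (w x i r - w x l r)) with hT
  have e0 : ∑ l, cst K b l * (psi x i l * (V x b i - V x b l)) = T := by
    simp only [hT, V, ← Finset.sum_sub_distrib, Finset.mul_sum]
    exact Finset.sum_congr rfl fun l _ => Finset.sum_congr rfl fun r _ => by ring
  have e1 : T = ∑ l, ∑ r, cst K b l * cst K b r * (psi x i r * (w x i l - w x r l)) := by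
    rw [hT, Finset.sum_comm]
    exact Finset.sum_congr rfl fun l _ => Finset.sum_congr rfl fun r _ => by ring
  have e2 : T + T = ∑ l, ∑ r,
      ((if l = r then 2 * (cst K b l * cst K b r * (psi x i l * w x i l)) else 0)
      + (if i = r then cst K b l * cst K b r * (psi x i l * w x i l) else 0)
      + (if i = l then cst K b l * cst K b r * (psi x i r * w x i r) else 0)) := by
    -- one copy of `T` has its summation indices swapped
    nth_rewrite 2 [e1]
    simp only [hT, ← Finset.sum_add_distrib]
    refine Finset.sum_congr rfl fun l _ => Finset.sum_congr rfl fun r _ => ?_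
    have := three_term_symm hx i l r
    split_ifs at this ⊢ <;> linear_combination cst K b l * cst K b r * this
  have e3 : ∑ l, ∑ r, (if i = l then cst K b l * cst K b r * (psi x i r * w x i r) else 0)
      = ∑ r, cst K b i * cst K b r * (psi x i r * w x i r) := by
    rw [Finset.sum_comm]
    simp
  simp only [Finset.sum_add_distrib, e3, Finset.sum_ite_eq, Finset.mem_univ, if_true] at e2
  rw [e0]
  refine mul_left_cancel₀ h2 ?_
  rw [two_mul, e2, Finset.mul_sum, ← Finset.sum_add_distrib, ← Finset.sum_add_distrib]
  exact Finset.sum_congr rfl fun l _ => by ring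

/-! ### The Lax relation for entries -/

/-- The rational function by which the `(i, j)` entry of `M` multiplies. -/
def mE (x : ι → K) (b : ι → ℂ) (i j : ι) : K :=
  2 * (cst K b j * psi x i j) - (if i = j then 2 * S x b i else 0)

/-- The `(i, j)` entry of `L` as an operator. -/
def lE (x : ι → K) (D : ι → Derivation ℂ K K) (a b : ι → ℂ) (i j : ι) (f : K) : K :=
  cst K b j * (phi x i j * f) + (if i = j then cst K a i * D i f - U x b i * f else 0)

lemma sum_lE_mE (i j : ι) (f : K) :
    ∑ l, lE x D a b i l (mE x b l j * f)
      = (∑ l, 2 * (cst K b l * (cst K b j * (phi x i l * psi x l j)))) * f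
        - 2 * (cst K b j * phi x i j * S x b j) * f
        + (cst K a i * D i (mE x b i j * f) - U x b i * (mE x b i j * f)) := by
  simp only [lE, Finset.sum_add_distrib, Finset.sum_ite_eq, Finset.mem_univ, if_true]
  congr 1
  have : ∀ l, cst K b l * (phi x i l * (mE x b l j * f))
      = 2 * (cst K b l * (cst K b j * (phi x i l * psi x l j))) * f
        - (if l = j then 2 * (cst K b l * phi x i l * S x b l) * f else 0) := by
    intro l; unfold mE; split_ifs <;> ring
  simp only [this, Finset.sum_sub_distrib, Finset.sum_ite_eq', Finset.mem_univ, if_true,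
    Finset.sum_mul]

lemma sum_mE_lE (i j : ι) (f : K) :
    ∑ l, mE x b i l * lE x D a b l j f
      = (∑ l, 2 * (cst K b l * (cst K b j * (psi x i l * phi x l j)))) * f
        - 2 * (cst K b j * phi x i j * S x b i) * f
        + mE x b i j * (cst K a j * D j f - U x b j * f) := by
  have : ∀ l, mE x b i l * lE x D a b l j f
      = 2 * (cst K b l * (cst K b j * (psi x i l * phi x l j))) * f
        - (if i = l then 2 * (cst K b j * phi x l j * S x b i) * f else 0)
        + (if l = j then mE x b i l * (cst K a l * D l f - U x b l * f) else 0) := by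
    intro l; unfold lE mE; split_ifs <;> ring
  simp only [this, Finset.sum_add_distrib, Finset.sum_sub_distrib, Finset.sum_ite_eq,
    Finset.sum_ite_eq', Finset.mem_univ, if_true, Finset.sum_mul]

/-- The off-diagonal entries of `[L, H] = [L, M]`, where only `a_i + b_i` constant is needed. -/
lemma lax_offdiag (hx : Function.Injective x)
    (hD : ∀ i j, D i (x j) = if j = i then x j else 0)
    (hab : ∀ i j, a i + b i = a j + b j) {i j : ι} (h : i ≠ j) (f : K) :
    lE x D a b i j (P x D a b f) - P x D a b (lE x D a b i j f)
      = ∑ l, lE x D a b i l (mE x b l j * f) - ∑ l, mE x b i l * lE x D a b l j f := by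
  have hcst : cst K a i + cst K b i = cst K a j + cst K b j := by
    simp only [cst, ← map_add, hab i j]
  have hs : (∑ l, 2 * (cst K b l * (cst K b j * (phi x i l * psi x l j))))
      - (∑ l, 2 * (cst K b l * (cst K b j * (psi x i l * phi x l j))))
      + 2 * (cst K b j * phi x i j) * (S x b i - S x b j)
      = 2 * cst K b j * (cst K b j - cst K b i) * (phi x i j * psi x i j) := by
    have : ∀ l, 2 * (cst K b l * (cst K b j * (phi x i l * psi x l j)))
        - 2 * (cst K b l * (cst K b j * (psi x i l * phi x l j)))
        + 2 * (cst K b j * phi x i j) * (cst K b l * psi x i l - cst K b l * psi x j l)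
        = (if l = j then 2 * cst K b j * cst K b l * (phi x i j * psi x i j) else 0)
          - (if l = i then 2 * cst K b j * cst K b l * (phi x i j * psi x i j) else 0) := by
      intro l
      have := three_term hx h l
      split_ifs at this ⊢ <;> linear_combination 2 * cst K b l * cst K b j * this
    simp only [S, ← Finset.sum_sub_distrib, Finset.mul_sum, ← Finset.sum_add_distrib, this]
    simp only [Finset.sum_sub_distrib, Finset.sum_ite_eq', Finset.mem_univ, if_true]
    ring
  rw [sum_lE_mE, sum_mE_lE]
  simp only [lE, if_neg h, add_zero, P_const_mul, P_phi_mul hx hD]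
  have hm : mE x b i j = cst K b j * (2 * psi x i j) := by
    simp only [mE, if_neg h]; ring
  have hDm : D i (mE x b i j * f)
      = cst K b j * (2 * (psi x i j * D i f - w x i j * psi x i j * f)) := by
    have h2 : mE x b i j * f
      = cst K b j * (psi x i j * f) + cst K b j * (psi x i j * f) := by rw [hm]; ring
    rw [h2, map_add, D_alg, leib, D_psi hx hD]
    simp [h]; ring
  have hi := two_U (b := b) hx i
  have hj := two_U (b := b) hx j
  have hp := two_phi hx i j
  rw [if_neg h] at hp
  rw [hDm, hm]
  linear_combination (-f) * hs + cst K b j * psi x i j * f * (hi - hj)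
    - cst K b j * (cst K b j - cst K b i) * psi x i j * f * hp
    + cst K b j * psi x i j * w x i j * f * hcst

/-- The diagonal entries of `[L, H] = [L, M]`; constancy of `a_i b_i` matches the first-order
parts and constancy of `a_i + b_i` the potentials. -/
lemma lax_diag (hx : Function.Injective x)
    (hD : ∀ i j, D i (x j) = if j = i then x j else 0)
    (hc : ∀ i j f, D i (D j f) = D j (D i f))
    (hab : ∀ i j, a i + b i = a j + b j) (hmul : ∀ i j, a i * b i = a j * b j)
    (i : ι) (f : K) :
    lE x D a b i i (P x D a b f) - P x D a b (lE x D a b i i f)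
      = ∑ l, lE x D a b i l (mE x b l i * f) - ∑ l, mE x b i l * lE x D a b l i f := by
  rw [sum_lE_mE, sum_mE_lE]
  have hm : mE x b i i = - (2 * S x b i) := by simp [mE]
  have hDm : D i (mE x b i i * f)
      = - (2 * S x b i) * D i f
        + 2 * (∑ l, cst K b l * (w x i l * psi x i l)) * f := by
    have h2 : mE x b i i * f = - (S x b i * f + S x b i * f) := by rw [hm]; ring
    rw [h2, map_neg, map_add, leib, D_S hx hD]
    ring
  have hPsub : ∀ g h : K, P x D a b (g - h) = P x D a b g - P x D a b h := by
    intro g h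
    simp only [P, map_sub, ← Finset.sum_sub_distrib]
    exact Finset.sum_congr rfl fun l _ => by ring
  have hU : P x D a b (U x b i * f) - U x b i * P x D a b f
      = 2 * (∑ l, cst K b l * (psi x i l * (cst K a l * D l f)))
        - 2 * (∑ l, cst K b l * psi x i l) * (cst K a i * D i f)
        + (∑ l, cst K b l * ((cst K a i + cst K a l) * (w x i l * psi x i l))) * f
        + (∑ l, cst K b l * (psi x i l * (V x b i - V x b l))) * f := by
    have : U x b i * f = ∑ l, algebraMap ℂ K (b l) * (phi x i l * f) := by
      simp only [U, Finset.sum_mul, mul_assoc]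
    rw [this, P_sum_mul]
    simp only [P_phi_mul hx hD, U, Finset.sum_mul, Finset.mul_sum, ← Finset.sum_sub_distrib,
      ← Finset.sum_add_distrib]
    exact Finset.sum_congr rfl fun l _ => by ring
  have hA : ∑ l, cst K b l * (psi x i l * (cst K a l * D l f))
      = cst K a i * (cst K b i * ∑ l, psi x i l * D l f) := by
    simp only [Finset.mul_sum]
    refine Finset.sum_congr rfl fun l _ => ?_
    have : cst K a i * cst K b i = cst K a l * cst K b l := by
      simp only [cst, ← map_mul, hmul i l]
    linear_combination (- (psi x i l * D l f)) * this
  have hB : (∑ l, cst K b l * ((cst K a i + cst K a l) * (w x i l * psi x i l)))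
      + (∑ l, cst K b l * ((cst K b l + cst K b i) * (w x i l * psi x i l)))
      = 2 * (cst K a i + cst K b i) * ∑ l, cst K b l * (w x i l * psi x i l) := by
    simp only [Finset.mul_sum, ← Finset.sum_add_distrib]
    refine Finset.sum_congr rfl fun l _ => ?_
    have : cst K a i + cst K b i = cst K a l + cst K b l := by
      simp only [cst, ← map_add, hab i l]
    linear_combination (- (cst K b l * (w x i l * psi x i l))) * this
  have hC : (∑ l, 2 * (cst K b l * (cst K b i * (phi x i l * psi x l i))))
      - (∑ l, 2 * (cst K b l * (cst K b i * (psi x i l * phi x l i))))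
      = 2 * cst K b i * ∑ l, cst K b l * (w x i l * psi x i l) := by
    simp only [Finset.mul_sum, ← Finset.sum_sub_distrib]
    refine Finset.sum_congr rfl fun l _ => ?_
    rw [psi_symm x l i, w]
    ring
  have hS : S x b i = ∑ l, cst K b l * psi x i l := rfl
  have hDP := D_P (a := a) (b := b) hx hD hc i f
  rw [sum_psi_V hx, hA, ← hS] at hU
  simp only [lE, phi_self, zero_mul, mul_zero, zero_add, if_true, hPsub]
  rw [P_const_mul, hDm, hm]
  linear_combination cst K a i * hDP + hU + f * hB - f * hC

lemma lax (hx : Function.Injective x)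
    (hD : ∀ i j, D i (x j) = if j = i then x j else 0)
    (hc : ∀ i j f, D i (D j f) = D j (D i f))
    (hab : ∀ i j, a i + b i = a j + b j) (hmul : ∀ i j, a i * b i = a j * b j)
    (i j : ι) (f : K) :
    lE x D a b i j (P x D a b f) - P x D a b (lE x D a b i j f)
      = ∑ l, lE x D a b i l (mE x b l j * f) - ∑ l, mE x b i l * lE x D a b l j f := by
  by_cases h : i = j
  · subst h; exact lax_diag hx hD hc hab hmul i f
  · exact lax_offdiag hx hD hab h f

/-- Reduction of `Σ_i b_i (∂_i^{(2)} f) / κ` to the normal form of the Hamiltonian. -/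
lemma P_eq (κ : ℂ) (hκ : κ ≠ 0) (hmul : ∀ i, a i * b i = κ) (f : K) :
    ∑ i, algebraMap ℂ K (κ⁻¹ * b i) * (cst K a i * (cst K a i * D i (D i f))
      - ∑ j, cst K b j * (phi x i j * (cst K a i * D i f - cst K a j * D j f)))
      = P x D a b f := by
  have hk : ∀ i, algebraMap ℂ K κ⁻¹ * (cst K a i * cst K b i) = 1 := by
    intro i
    simp only [cst, ← map_mul, hmul i, inv_mul_cancel₀ hκ, map_one]
  have h1 : ∑ i, ∑ j, algebraMap ℂ K κ⁻¹ * cst K b i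
        * (cst K b j * (phi x i j * (cst K a j * D j f)))
      = ∑ i, ∑ j, cst K b j * phi x j i * D i f := by
    rw [Finset.sum_comm]
    refine Finset.sum_congr rfl fun i _ => Finset.sum_congr rfl fun j _ => ?_
    linear_combination (cst K b j * phi x j i * D i f) * hk i
  have h2 : ∑ i, ∑ j, algebraMap ℂ K κ⁻¹ * cst K b i
        * (cst K b j * (phi x i j * (cst K a i * D i f)))
      = ∑ i, ∑ j, cst K b j * phi x i j * D i f := by
    refine Finset.sum_congr rfl fun i _ => Finset.sum_congr rfl fun j _ => ?_
    linear_combination (cst K b j * phi x i j * D i f) * hk i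
  have h3 : ∀ i, algebraMap ℂ K (κ⁻¹ * b i) * (cst K a i * (cst K a i * D i (D i f))
      - ∑ j, cst K b j * (phi x i j * (cst K a i * D i f - cst K a j * D j f)))
      = cst K a i * D i (D i f)
        - ∑ j, algebraMap ℂ K κ⁻¹ * cst K b i
            * (cst K b j * (phi x i j * (cst K a i * D i f)))
        + ∑ j, algebraMap ℂ K κ⁻¹ * cst K b i
            * (cst K b j * (phi x i j * (cst K a j * D j f))) := by
    intro i
    simp only [map_mul, mul_sub, Finset.sum_sub_distrib, Finset.mul_sum]
    linear_combination (cst K a i * D i (D i f)) * hk i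
  rw [Finset.sum_congr rfl fun i _ => h3 i, Finset.sum_add_distrib, Finset.sum_sub_distrib,
    h1, h2]
  simp only [P, V, w, Finset.sum_mul, mul_sub, sub_mul, Finset.sum_sub_distrib]
  ring

/-! ### Operators on the field of rational functions -/

lemma xv_injective (N : ℕ) : Function.Injective (xv : Fin N → Fld N) := by
  intro i j h
  exact MvPolynomial.X_injective
    (IsFractionRing.injective (MvPolynomial (Fin N) ℂ)
      (FractionRing (MvPolynomial (Fin N) ℂ)) h)

/-- An operator satisfying the Leibniz rule, as a derivation. -/
def toDer {N : ℕ} (E : EndF N) (h : ∀ f g, E (f * g) = f * E g + E f * g) :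
    Derivation ℂ (Fld N) (Fld N) :=
  Derivation.mk' E fun f g => by rw [h, smul_eq_mul, smul_eq_mul, mul_comm (E f)]

/-- A derivation of `ℂ(x₁,…,x_N)` is determined by its values on the coordinates. -/
lemma der_eq_zero {N : ℕ} (E : Derivation ℂ (Fld N) (Fld N)) (h : ∀ j, E (xv j) = 0)
    (f : Fld N) : E f = 0 := by
  have : IsScalarTower ℂ (MvPolynomial (Fin N) ℂ) (Fld N) :=
    inferInstanceAs (IsScalarTower ℂ (MvPolynomial (Fin N) ℂ)
      (FractionRing (MvPolynomial (Fin N) ℂ)))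
  have : IsFractionRing (MvPolynomial (Fin N) ℂ) (Fld N) :=
    inferInstanceAs (IsFractionRing (MvPolynomial (Fin N) ℂ)
      (FractionRing (MvPolynomial (Fin N) ℂ)))
  have hp : ∀ p : MvPolynomial (Fin N) ℂ, E (algebraMap _ (Fld N) p) = 0 := by
    intro p
    induction p using MvPolynomial.induction_on with
    | C c =>
      rw [← MvPolynomial.algebraMap_eq, ← IsScalarTower.algebraMap_apply]
      exact E.map_algebraMap c
    | add p q hp hq => rw [map_add, map_add, hp, hq, add_zero]
    | mul_X p i hp =>
      have hi : E (algebraMap _ (Fld N) (MvPolynomial.X i)) = 0 := h i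
      rw [map_mul, leib, hp, hi]; simp
  obtain ⟨p, q, hq, rfl⟩ := IsFractionRing.div_surjective (A := MvPolynomial (Fin N) ℂ) f
  have hq0 : algebraMap _ (Fld N) q ≠ 0 :=
    IsFractionRing.to_map_ne_zero_of_mem_nonZeroDivisors hq
  have h1 := leib E (algebraMap _ (Fld N) q) (algebraMap _ (Fld N) p / algebraMap _ (Fld N) q)
  rw [mul_div_cancel₀ _ hq0, hp, hp, mul_zero, add_zero] at h1
  exact (mul_eq_zero.1 h1.symm).resolve_left hq0

lemma der_comm {N : ℕ} (D : Fin N → Derivation ℂ (Fld N) (Fld N))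
    (hD : ∀ i j, D i (xv j) = if j = i then xv j else 0) (i j : Fin N) (f : Fld N) :
    D i (D j f) = D j (D i f) := by
  have := der_eq_zero ⁅D i, D j⁆ (fun l => by
    rw [Derivation.commutator_apply, hD, hD]
    split_ifs <;> simp_all) f
  rwa [Derivation.commutator_apply, sub_eq_zero] at this

lemma mulOp_apply {N : ℕ} (g f : Fld N) : mulOp g f = g * f := rfl

lemma smul_op_apply {N : ℕ} (c : ℂ) (E : EndF N) (f : Fld N) :
    (c • E) f = algebraMap ℂ (Fld N) c * E f := by
  rw [LinearMap.smul_apply, Algebra.smul_def]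

lemma sum_erase_univ {N : ℕ} (i : Fin N) (F : Fin N → Fld N) (h : F i = 0) :
    ∑ l ∈ Finset.univ.erase i, F l = ∑ l, F l :=
  Finset.sum_erase _ h

section glue

variable {n : ℕ} {k : ℂ} {N : ℕ}

/-- The entries of `M` act as multiplication by `mE`, with the sums over `l ≠ i` completed to
sums over all `l`. -/
lemma Mmat_apply (i j : Fin N) :
    Mmat n k N i j = mulOp (mE xv (fun l : Fin N => k ^ (1 - par n l)) i j) := by
  ext f
  simp only [Mmat, Matrix.of_apply, MmatEntry, mE, mulOp_apply]
  split_ifs with h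
  · subst h
    simp only [LinearMap.neg_apply, LinearMap.sum_apply, smul_op_apply, mulOp_apply]
    rw [sum_erase_univ i _ (by simp)]
    simp only [S, psi, map_mul, map_ofNat, Finset.mul_sum, Finset.sum_mul, cst,
      sub_mul, sub_self, ← Finset.sum_neg_distrib]
    simp [mul_assoc]
  · simp only [smul_op_apply, mulOp_apply, map_mul, map_ofNat, psi, cst]
    ring

lemma Lmat_apply (D : Fin N → Derivation ℂ (Fld N) (Fld N)) (Deul : Fin N → EndF N)
    (h : ∀ i f, Deul i f = D i f) (i j : Fin N) (f : Fld N) :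
    Lmat n k Deul i j f
      = lE xv D (fun l : Fin N => k ^ par n l) (fun l : Fin N => k ^ (1 - par n l)) i j f := by
  simp only [Lmat, Matrix.of_apply, lE]
  split_ifs with hij
  · subst hij
    simp only [LinearMap.sub_apply, LinearMap.sum_apply, smul_op_apply, mulOp_apply, h]
    rw [sum_erase_univ i _ (by simp)]
    simp [U, phi, Finset.sum_mul, mul_assoc]
  · rw [smul_op_apply, mulOp_apply, add_zero]
    rfl

lemma Ltot_apply (hk : k ≠ 0) (D : Fin N → Derivation ℂ (Fld N) (Fld N))
    (Deul : Fin N → EndF N) (h : ∀ i f, Deul i f = D i f) (f : Fld N) :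
    Ltot n k Deul 2 f
      = P xv D (fun l : Fin N => k ^ par n l) (fun l : Fin N => k ^ (1 - par n l)) f := by
  rw [← P_eq k hk (fun i => by unfold par; split_ifs <;> simp)]
  simp only [Ltot, Dpow, LinearMap.sum_apply, smul_op_apply, LinearMap.sub_apply,
    LinearMap.comp_apply, mulOp_apply, h]
  refine Finset.sum_congr rfl fun i _ => ?_
  have e : k⁻¹ ^ par n i = k⁻¹ * k ^ (1 - par n i) := by
    unfold par; split_ifs <;> simp [hk]
  rw [e, D_alg, sum_erase_univ i _ (by simp)]
  rfl

end glue

end MoserLax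

/-- The matrices `L, M, H` satisfy `M e = 0`, `e^* M = 0` and the Lax
relation `[L, H] = [L, M]`, where `e` is the column vector of ones and `e^*` is the row
vector with `n` entries `1` and `m` entries `1/k`. -/
theorem Moser_matrices_Lax_relation
    (n m : ℕ) (hn : 1 ≤ n) (hm : 1 ≤ m) (k : ℂ) (hk : k ≠ 0)
    (Deul : Fin (n + m) → EndF (n + m)) (hD : IsEulerFamily Deul) :
    (Mmat n k (n + m)).mulVec (fun _ => (1 : EndF (n + m))) = 0 ∧
    Matrix.vecMul (fun i => (k⁻¹ ^ par n i) • (1 : EndF (n + m))) (Mmat n k (n + m)) = 0 ∧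
    Lmat n k Deul * Hmat n k Deul - Hmat n k Deul * Lmat n k Deul
      = Lmat n k Deul * Mmat n k (n + m) - Mmat n k (n + m) * Lmat n k Deul := by
  have hx := MoserLax.xv_injective (n + m)
  let D : Fin (n + m) → Derivation ℂ (Fld (n + m)) (Fld (n + m)) := fun i =>
    MoserLax.toDer (Deul i) (hD.1 i)
  have hDe : ∀ i f, Deul i f = D i f := fun _ _ => rfl
  have hDx : ∀ i j, D i (xv j) = if j = i then xv j else 0 := hD.2
  have hc := MoserLax.der_comm D hDx
  have hinv : ∀ i : Fin (n + m), k⁻¹ ^ par n i = k⁻¹ * k ^ (1 - par n i) := by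
    intro i; unfold par; split_ifs <;> simp [hk]
  refine ⟨?_, ?_, ?_⟩
  · funext i
    ext f
    simp only [Matrix.mulVec, dotProduct, mul_one, Pi.zero_apply, LinearMap.zero_apply,
      LinearMap.sum_apply, MoserLax.Mmat_apply, MoserLax.mulOp_apply, ← Finset.sum_mul]
    simp [MoserLax.mE, MoserLax.S, Finset.mul_sum]
  · funext j
    ext f
    simp only [Matrix.vecMul, dotProduct, Module.End.mul_apply, Module.End.one_apply, Pi.zero_apply,
      LinearMap.zero_apply, LinearMap.sum_apply, MoserLax.smul_op_apply, MoserLax.Mmat_apply,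
      MoserLax.mulOp_apply, hinv, map_mul]
    have : ∀ i : Fin (n + m), algebraMap ℂ (Fld (n + m)) k⁻¹
          * algebraMap ℂ (Fld (n + m)) (k ^ (1 - par n i))
          * (MoserLax.mE xv (fun l => k ^ (1 - par n l)) i j * f)
        = algebraMap ℂ (Fld (n + m)) k⁻¹ * algebraMap ℂ (Fld (n + m)) (k ^ (1 - par n j)) * 2
            * (algebraMap ℂ (Fld (n + m)) (k ^ (1 - par n i)) * MoserLax.psi xv j i) * f
          - (if i = j then algebraMap ℂ (Fld (n + m)) k⁻¹
              * algebraMap ℂ (Fld (n + m)) (k ^ (1 - par n i)) * 2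
              * MoserLax.S xv (fun l => k ^ (1 - par n l)) i * f else 0) := by
      intro i
      rw [MoserLax.mE, MoserLax.psi_symm xv i j]
      split_ifs <;> ring
    simp only [this, Finset.sum_sub_distrib, Finset.sum_ite_eq', Finset.mem_univ, if_true,
      ← Finset.sum_mul, ← Finset.mul_sum]
    exact sub_self _
  · ext i j f
    have key := MoserLax.lax (a := fun l : Fin (n + m) => k ^ par n l)
      (b := fun l : Fin (n + m) => k ^ (1 - par n l)) hx hDx hc
      (fun i j => by unfold par; split_ifs <;> simp [add_comm])
      (fun i j => by unfold par; split_ifs <;> simp) i j f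
    rw [Matrix.sub_apply, Hmat, Matrix.mul_diagonal, Matrix.diagonal_mul]
    simp only [Matrix.sub_apply, Matrix.mul_apply, LinearMap.sub_apply, LinearMap.sum_apply, Module.End.mul_apply,
      MoserLax.Mmat_apply, MoserLax.mulOp_apply, MoserLax.Lmat_apply D Deul hDe,
      MoserLax.Ltot_apply hk D Deul hDe]
    exact key
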